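/- For all integers r ≥ 1 and k ≥ 1, the k-colour list Ramsey number of the star satisfies (r-1)k + 1 ≤ R_ℓ(K_{1,r}, k). -/

import Mathlib

/-- The star `K_{1,r}` with centre `0` and `r` leaves. -/
def starGraph (r : ℕ) : SimpleGraph (Fin (r + 1)) :=
  SimpleGraph.fromRel (fun a _ => a = 0)

/-- A colouring `c` of the edges of the complete graph on `Fin n` contains a
monochromatic copy of the graph `G`. -/
def HasMonoCopy {α β : Type*} (G : SimpleGraph α) {n : ℕ} (c : Sym2 (Fin n) → β) : Prop :=
  ∃ (f : α → Fin n) (x : β), Function.Injective f ∧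
    ∀ a b, G.Adj a b → c s(f a, f b) = x

/-- The `k`-colour list Ramsey number of a graph `G`: the least `n` for which one can
assign a list of `k` colours to each edge of `K_n` so that every colouring of the edges
from these lists contains a monochromatic copy of `G`. -/
noncomputable def listRamsey {α : Type*} (G : SimpleGraph α) (k : ℕ) : ℕ :=
  sInf { n : ℕ | ∃ L : Sym2 (Fin n) → Finset ℕ,
    (∀ e : Sym2 (Fin n), ¬ e.IsDiag → (L e).card = k) ∧
    ∀ c : Sym2 (Fin n) → ℕ, (∀ e : Sym2 (Fin n), ¬ e.IsDiag → c e ∈ L e) →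
      HasMonoCopy G c }

/-!
Split at most `(r - 1) * k` vertices into `r - 1` blocks of size at most `k`. From lists of size `k`
the edges can be coloured so that no vertex sends two edges of the same colour into one block;
by the pigeonhole principle over the blocks there is then no monochromatic `K_{1,r}`.

Inside a block this is the theorem of Häggkvist and Janssen that the line graph of `K_n` is
`n`-choosable. Its graph polynomial is a product of Vandermonde determinants, one for each vertex,
so the coefficient of a monomial is a signed count of the ways to choose a permutation at each
vertex whose entries add up, over the two ends of each edge, to the exponent of that edge. With
`N = n - 1`, there is a monomial with all exponents at most `N` for which exactly one choice
exists: for about half of the edges the label at one end is forced, from `N - 1` downwards, and the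
symmetry that reverses vertices and labels settles the others. The Combinatorial Nullstellensatz
applies to this monomial.

Between two blocks it is Galvin's theorem for the `k × k` rook's graph, whose orientation along a
Latin square has outdegrees less than `k` and a kernel in every induced subgraph.
-/

/-- The exponent of the edge `uv` in the distinguished monomial, for `ε = 0`. The vertices are
`0, …, N`, with `0` in a special role; `ε = 1` gives the exponents after `revNumbering`. -/
def edgeExp (N ε u v : ℕ) : ℕ :=
  if u = 0 ∨ v = 0 then
    if 2 * (u + v) ≤ N + ε then N + ε - 2 else N + ε - 1
  else
    if u + v ≤ N + ε then N - 2 else N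

/-- Each row `σ u` numbers the vertices `v ≠ u` of `{0, …, N}` by `0, …, N - 1`, and the two labels
of every edge add up to its exponent. -/
structure IsArrangement (N ε : ℕ) (σ : ℕ → ℕ → ℕ) : Prop where
  lt : ∀ {u v}, u ≤ N → v ≤ N → v ≠ u → σ u v < N
  inj : ∀ {u v w}, u ≤ N → v ≤ N → w ≤ N → v ≠ u → w ≠ u → σ u v = σ u w → v = w
  sum : ∀ {u v}, u ≤ N → v ≤ N → v ≠ u → σ u v + σ v u = edgeExp N ε u v

/-- At the vertex `u`, the label `N - 1 - 2 * i` is forced onto the edge `uv`. This depends on the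
residue `2 * i + p` of `u + v - ε` modulo `N + 1`, where `0` in row `u` counts as a second copy
of `u`. -/
def IsPivot (N ε i p u v : ℕ) : Prop :=
  0 < u ∧ u ≤ N ∧ v ≤ N ∧ p ≤ 1 ∧ (v = 0 ∨ p = 0 ∧ u < v ∨ p = 1 ∧ v < u) ∧
    ((if v = 0 then 2 * u else u + v) = 2 * i + p + ε ∧ 4 * i + p ≤ N ∨
      (if v = 0 then 2 * u else u + v) = 2 * i + p + ε + N + 1 ∧ 4 * i + p + 2 ≤ N)

/-- The induction hypothesis for forcing the labels of the pivots, in the lexicographic order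
of `(i, u)`. -/
def PivotsBefore (N ε : ℕ) (σ : ℕ → ℕ → ℕ) (i u : ℕ) : Prop :=
  ∀ {j q x y}, IsPivot N ε j q x y → (j < i ∨ j = i ∧ x < u) → σ x y + 2 * j + 1 = N

section UniqueArrangement

variable {N ε i j p q r u v w x : ℕ} {σ τ : ℕ → ℕ → ℕ}

theorem edgeExp_zero_right (N ε u : ℕ) :
    edgeExp N ε u 0 = if 2 * u ≤ N + ε then N + ε - 2 else N + ε - 1 := by
  simp [edgeExp]

theorem edgeExp_of_pos (hu : 0 < u) (hv : 0 < v) :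
    edgeExp N ε u v = if u + v ≤ N + ε then N - 2 else N := by
  simp [edgeExp, hu.ne', hv.ne']

theorem edgeExp_comm (N ε u v : ℕ) : edgeExp N ε u v = edgeExp N ε v u := by
  simp only [edgeExp, or_comm, add_comm]

theorem isPivot_zero_right : IsPivot N ε i p u 0 ↔ 0 < u ∧ u ≤ N ∧ p ≤ 1 ∧
    (2 * u = 2 * i + p + ε ∧ 4 * i + p ≤ N ∨
      2 * u = 2 * i + p + ε + N + 1 ∧ 4 * i + p + 2 ≤ N) := by
  simp [IsPivot]

theorem isPivot_of_pos (hv : 0 < v) : IsPivot N ε i p u v ↔ 0 < u ∧ u ≤ N ∧ v ≤ N ∧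
    (p = 0 ∧ u < v ∨ p = 1 ∧ v < u) ∧ (u + v = 2 * i + p + ε ∧ 4 * i + p ≤ N ∨
      u + v = 2 * i + p + ε + N + 1 ∧ 4 * i + p + 2 ≤ N) := by
  simp only [IsPivot, hv.ne', if_false, false_or]
  omega

theorem IsPivot.ne (h : IsPivot N ε i p u v) : v ≠ u := by
  unfold IsPivot at h
  omega

theorem IsPivot.unique (hv : IsPivot N ε i p u v) (hw : IsPivot N ε i q u w) : v = w := by
  unfold IsPivot at hv hw
  split_ifs at hv hw <;> omega

theorem IsPivot.region (h : IsPivot N ε i p u v) :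
    (4 * i + 1 ≤ N ∨ 4 * i ≤ N ∧ 2 * u ≤ 2 * i + ε) ∧ (4 * i + 2 ≤ N ∨ u ≤ 2 * i + ε) ∧
      (4 * i + 3 ≤ N ∨ 2 * u ≤ 2 * i + ε + N + 1) := by
  unfold IsPivot at h
  split_ifs at h <;> omega

theorem IsArrangement.eq_of_sum_eq (h : IsArrangement N ε σ) (hu : u ≤ N) (hw : w ≤ N)
    (hx : x ≤ N) (huw : u ≠ w) (hxw : x ≠ w)
    (e : σ u w + edgeExp N ε x w = σ x w + edgeExp N ε u w) : u = x := by
  have hsu := h.sum hu hw huw.symm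
  have hsx := h.sum hx hw hxw.symm
  exact h.inj hw hu hx huw hxw (by omega)

theorem IsArrangement.surjOn (h : IsArrangement N ε σ) {a : ℕ} (hu : u ≤ N) (ha : a < N) :
    ∃ v ≤ N, v ≠ u ∧ σ u v = a := by
  have hmaps : Set.MapsTo (σ u) ((Finset.range (N + 1)).erase u) (Finset.range N) := by
    intro v hv
    simp only [Finset.coe_erase, Finset.coe_range, Set.mem_sdiff, Set.mem_Iio,
      Set.mem_singleton_iff] at hv ⊢
    exact h.lt hu (by omega) hv.2
  have hinj : Set.InjOn (σ u) ((Finset.range (N + 1)).erase u) := by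
    intro v hv w hw
    simp only [Finset.coe_erase, Finset.coe_range, Set.mem_sdiff, Set.mem_Iio,
      Set.mem_singleton_iff] at hv hw
    exact h.inj hu (by omega) (by omega) hv.2 hw.2
  have hcard : (Finset.range N).card ≤ ((Finset.range (N + 1)).erase u).card := by
    rw [Finset.card_erase_of_mem (Finset.mem_range.2 (by omega))]
    simp
  obtain ⟨v, hv, rfl⟩ :=
    Finset.surjOn_of_injOn_of_card_le _ hmaps hinj hcard (Finset.mem_coe.2 (Finset.mem_range.2 ha))
  simp only [Finset.coe_erase, Finset.coe_range, Set.mem_sdiff, Set.mem_Iio,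
    Set.mem_singleton_iff] at hv
  exact ⟨v, by omega, hv.2, rfl⟩

theorem PivotsBefore.not_isPivot (H : PivotsBefore N ε σ i u) (hv : IsPivot N ε i p u v)
    (hwv : w ≠ v) (hlab : σ u w + 2 * i + 1 = N) (hji : j ≤ i) : ¬ IsPivot N ε j q u w := by
  intro hp
  obtain hlt | rfl := hji.lt_or_eq
  · have := H hp (.inl hlt)
    omega
  · exact hwv (hp.unique hv)

theorem PivotsBefore.not_isPivot_swap (H : PivotsBefore N ε σ i u) (h : IsArrangement N ε σ)
    (hv : IsPivot N ε i p u v) (hw : 0 < w) (hlab : σ u w + 2 * i + 1 = N)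
    (hlt : j < i ∨ j = i ∧ w < u) : ¬ IsPivot N ε j q w u := by
  intro hp
  have hlab' := H hp hlt
  have hsum := h.sum hv.2.1 hp.2.1 hp.ne.symm
  rw [edgeExp_of_pos hv.1 hw] at hsum
  rw [isPivot_of_pos hv.1] at hp
  unfold IsPivot at hv
  split_ifs at hv hsum <;> omega

theorem PivotsBefore.edgeExp_ne (H : PivotsBefore N ε σ i u) (h : IsArrangement N ε σ)
    (huN : u ≤ N) (huw : u ≠ w) (hlab : σ u w + 2 * i + 1 = N) (hx : IsPivot N ε j q x w)
    (hlt : j < i ∨ j = i ∧ x < u) (hxu : x ≠ u) :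
    edgeExp N ε x w + 2 * j ≠ edgeExp N ε u w + 2 * i := by
  intro he
  have hlab' := H hx hlt
  exact hxu.symm (h.eq_of_sum_eq huN hx.2.2.1 hx.2.1 huw hx.ne.symm (by omega))

theorem PivotsBefore.label_zero_ne (H : PivotsBefore N ε σ i u) (h : IsArrangement N ε σ)
    (hε : ε ≤ 1) (hv : IsPivot N ε i p u v) (hv0 : 0 ≠ v) : σ u 0 + 2 * i + 1 ≠ N := by
  intro hlab
  have hsum := h.sum hv.2.1 (Nat.zero_le N) hv.1.ne
  have known : ∀ j q, j ≤ i → ¬ IsPivot N ε j q u 0 :=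
    fun j q hji => H.not_isPivot hv hv0 hlab hji
  have common : ∀ q x, x < u → IsPivot N ε i q x 0 → edgeExp N ε x 0 ≠ edgeExp N ε u 0 :=
    fun q x hxu hx he =>
      H.edgeExp_ne h hv.2.1 hv.1.ne' hlab hx (.inr ⟨rfl, hxu⟩) hxu.ne (by rw [he])
  rw [isPivot_of_pos (Nat.pos_of_ne_zero hv0.symm)] at hv
  simp only [edgeExp_zero_right, isPivot_zero_right] at known common hsum
  by_cases hT : 2 * u ≤ N + ε
  · obtain ⟨j, q, hq, hj⟩ : ∃ j q, q ≤ 1 ∧ 2 * u = 2 * j + q + ε :=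
      ⟨(2 * u - ε) / 2, (2 * u - ε) % 2, by omega⟩
    simp only [if_pos hT] at hsum common
    obtain hle | hlt := le_or_gt j i
    · exact known j q hle (by omega)
    · exact common ε (i + ε) (by omega) (by omega) (if_pos (by omega))
  · obtain ⟨j, q, hq, hj⟩ : ∃ j q, q ≤ 1 ∧ 2 * u = 2 * j + q + ε + N + 1 :=
      ⟨(2 * u - ε - N - 1) / 2, (2 * u - ε - N - 1) % 2, by omega⟩
    simp only [if_neg hT] at hsum common
    obtain hle | hlt := le_or_gt j i
    · exact known j q hle (by omega)
    · obtain ⟨x, q', hx, hq'⟩ : ∃ x q', 2 * x = 2 * i + q' + ε + N + 1 ∧ q' ≤ 1 :=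
        ⟨(2 * i + ε + N + 2) / 2, (ε + N + 1) % 2, by omega⟩
      exact common q' x (by omega) (by omega) (if_neg (by omega))

theorem PivotsBefore.lt_index (H : PivotsBefore N ε σ i u) (h : IsArrangement N ε σ)
    (hv : IsPivot N ε i p u v) (hw : 0 < w) (hwN : w ≤ N) (hwu : w ≠ u) (hwv : w ≠ v)
    (hlab : σ u w + 2 * i + 1 = N) (hr : r ≤ 1)
    (hT : u + w = 2 * j + r + ε ∨ u + w = 2 * j + r + ε + N + 1) :
    i < j ∨ j = i ∧ r = 1 ∧ u < w := by
  by_contra! hcon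
  have hreg := hv.region
  have hu := hv.1
  have huN := hv.2.1
  have known : ¬ IsPivot N ε j r u w := H.not_isPivot hv hwv hlab (by omega)
  have known' : (j < i ∨ j = i ∧ w < u) → ¬ IsPivot N ε j r w u :=
    fun hlt => H.not_isPivot_swap h hv hw hlab hlt
  rw [isPivot_of_pos hw] at known
  rw [isPivot_of_pos hu] at known'
  clear hv H h
  obtain hlt | hgt := hwu.symm.lt_or_gt <;> obtain rfl | rfl : r = 0 ∨ r = 1 := by omega
  all_goals omega

theorem PivotsBefore.label_ne_of_le (H : PivotsBefore N ε σ i u) (h : IsArrangement N ε σ)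
    (hε : ε ≤ 1) (hv : IsPivot N ε i p u v) (hw : 0 < w) (hwN : w ≤ N) (hwu : w ≠ u)
    (hwv : w ≠ v) (hT : u + w ≤ N + ε) : σ u w + 2 * i + 1 ≠ N := by
  intro hlab
  have hu := hv.1
  have huN := hv.2.1
  have hreg := hv.region
  obtain ⟨j, r, hr, hj⟩ : ∃ j r, r ≤ 1 ∧ u + w = 2 * j + r + ε :=
    ⟨(u + w - ε) / 2, (u + w - ε) % 2, by omega⟩
  have hij := H.lt_index h hv hw hwN hwu hwv hlab hr (.inl hj)
  have hsum := h.sum huN hwN hwu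
  have common : ∀ j q x, 0 < x → (j < i ∨ j = i ∧ x < u) → x ≠ u → IsPivot N ε j q x w →
      (if x + w ≤ N + ε then N - 2 else N) + 2 * j ≠ N - 2 + 2 * i := by
    intro j q x hx hlt hxu hp
    have := H.edgeExp_ne h huN hwu.symm hlab hp hlt hxu
    rwa [edgeExp_of_pos hu hw, if_pos hT, edgeExp_of_pos hx hw] at this
  rw [edgeExp_of_pos hu hw, if_pos hT] at hsum
  simp only [isPivot_of_pos hw] at common
  clear hv H h
  obtain hwi | hwi := lt_or_ge w (2 * i + ε)
  · obtain hside | hside := lt_or_ge (2 * i + ε) (2 * w)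
    · exact common i 0 (2 * i + ε - w) (by omega) (by omega) (by omega) (by omega)
        (by rw [if_pos (by omega)])
    · exact common i 1 (2 * i + 1 + ε - w) (by omega) (by omega) (by omega) (by omega)
        (by rw [if_pos (by omega)])
  · obtain hside | hside := lt_or_ge (N + 2 * i + ε) (2 * w + 1)
    · exact common (i - 1) 0 (N + 2 * i + ε - w - 1) (by omega) (by omega) (by omega) (by omega)
        (by rw [if_neg (by omega)]; omega)
    · exact common (i - 1) 1 (N + 2 * i + ε - w) (by omega) (by omega) (by omega) (by omega)
        (by rw [if_neg (by omega)]; omega)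

theorem PivotsBefore.label_ne_of_gt (H : PivotsBefore N ε σ i u) (h : IsArrangement N ε σ)
    (hv : IsPivot N ε i p u v) (hw : 0 < w) (hwN : w ≤ N) (hwu : w ≠ u)
    (hwv : w ≠ v) (hT : N + ε < u + w) : σ u w + 2 * i + 1 ≠ N := by
  intro hlab
  have hu := hv.1
  have huN := hv.2.1
  have hreg := hv.region
  obtain ⟨j, r, hr, hj⟩ : ∃ j r, r ≤ 1 ∧ u + w = 2 * j + r + ε + N + 1 :=
    ⟨(u + w - ε - N - 1) / 2, (u + w - ε - N - 1) % 2, by omega⟩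
  have hij := H.lt_index h hv hw hwN hwu hwv hlab hr (.inr hj)
  have common : ∀ q x, 0 < x → x < u → IsPivot N ε i q x w → x + w ≤ N + ε := by
    intro q x hx hxu hp
    have := H.edgeExp_ne h huN hwu.symm hlab hp (.inr ⟨rfl, hxu⟩) hxu.ne
    rw [edgeExp_of_pos hu hw, if_neg hT.not_ge, edgeExp_of_pos hx hw] at this
    split_ifs at this <;> omega
  simp only [isPivot_of_pos hw] at common
  clear hv H h
  obtain hside | hside := lt_or_ge (2 * i + ε + N + 1) (2 * w)
  · have := common 0 (2 * i + ε + N + 1 - w) (by omega) (by omega) (by omega)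
    omega
  · have := common 1 (2 * i + ε + N + 2 - w) (by omega) (by omega) (by omega)
    omega

-- If the label sat on another edge `uw`, then `uw` or `wu` would be an earlier pivot, or the
-- sum condition on `uw` would repeat at `w` the label that an earlier pivot `xw` has there.
theorem IsArrangement.label_of_isPivot {i p u v : ℕ} (h : IsArrangement N ε σ) (hε : ε ≤ 1)
    (hv : IsPivot N ε i p u v) : σ u v + 2 * i + 1 = N := by
  have H : PivotsBefore N ε σ i u := fun hx _ => h.label_of_isPivot hε hx
  have hi : 2 * i + 1 ≤ N := by
    have := hv.1
    unfold IsPivot at hv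
    split_ifs at hv <;> omega
  obtain ⟨w, hwN, hwu, hw⟩ := h.surjOn (a := N - 1 - 2 * i) hv.2.1 (by omega)
  have hlab : σ u w + 2 * i + 1 = N := by omega
  by_cases hwv : w = v
  · rwa [← hwv]
  obtain rfl | hw0 := Nat.eq_zero_or_pos w
  · exact (H.label_zero_ne h hε hv hwv hlab).elim
  obtain hle | hgt := le_or_gt (u + w) (N + ε)
  · exact (H.label_ne_of_le h hε hv hw0 hwN hwu hwv hle hlab).elim
  · exact (H.label_ne_of_gt h hv hw0 hwN hwu hwv hgt hlab).elim
termination_by (i, u)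
decreasing_by
  rw [Prod.lex_def]
  assumption

/-- The negation of the vertex `u`, read modulo `N + 1`. -/
def negVertex (N u : ℕ) : ℕ :=
  if u = 0 then 0 else N + 1 - u

/-- The numbering obtained by reversing both the vertices and the labels. -/
def revNumbering (N : ℕ) (σ : ℕ → ℕ → ℕ) (u v : ℕ) : ℕ :=
  N - 1 - σ (negVertex N u) (negVertex N v)

theorem negVertex_le (N u : ℕ) : negVertex N u ≤ N := by
  unfold negVertex
  split_ifs <;> omega

theorem negVertex_negVertex (hu : u ≤ N) : negVertex N (negVertex N u) = u := by
  unfold negVertex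
  split_ifs <;> omega

theorem negVertex_inj (hu : u ≤ N) (hv : v ≤ N) : negVertex N u = negVertex N v ↔ u = v :=
  ⟨fun h => by rw [← negVertex_negVertex hu, h, negVertex_negVertex hv], congrArg _⟩

theorem edgeExp_negVertex (hu : u ≤ N) (hv : v ≤ N) (huv : v ≠ u) :
    edgeExp N 0 (negVertex N u) (negVertex N v) + edgeExp N 1 u v = 2 * (N - 1) := by
  unfold edgeExp negVertex
  split_ifs <;> omega

theorem IsArrangement.rev (h : IsArrangement N 0 σ) : IsArrangement N 1 (revNumbering N σ) := by
  have hlt : ∀ {u v}, u ≤ N → v ≤ N → v ≠ u → σ (negVertex N u) (negVertex N v) < N :=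
    fun hu hv hvu => h.lt (negVertex_le N _) (negVertex_le N _) (mt (negVertex_inj hv hu).1 hvu)
  refine ⟨fun hu hv hvu => ?_, fun {u v w} hu hv hw hvu hwu e => ?_, fun {u v} hu hv hvu => ?_⟩
  · have := hlt hu hv hvu
    unfold revNumbering
    omega
  · have := hlt hu hv hvu
    have := hlt hu hw hwu
    unfold revNumbering at e
    exact (negVertex_inj hv hw).1 <| h.inj (negVertex_le N u) (negVertex_le N v) (negVertex_le N w)
      (mt (negVertex_inj hv hu).1 hvu) (mt (negVertex_inj hw hu).1 hwu) (by omega)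
  · have := hlt hu hv hvu
    have := hlt hv hu hvu.symm
    have := h.sum (negVertex_le N u) (negVertex_le N v) (mt (negVertex_inj hv hu).1 hvu)
    have := edgeExp_negVertex hu hv hvu
    unfold revNumbering
    omega

theorem exists_pivot_residue {T : ℕ} (hT : T ≤ 2 * N + 1) : ∃ i p, p ≤ 1 ∧
    ((T = 2 * i + p ∧ 4 * i + p ≤ N ∨ T = 2 * i + p + N + 1 ∧ 4 * i + p + 2 ≤ N) ∨
      (2 * N + 2 - T = 2 * i + p + 1 ∧ 4 * i + p ≤ N ∨
        2 * N + 2 - T = 2 * i + p + 1 + N + 1 ∧ 4 * i + p + 2 ≤ N)) := by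
  obtain ⟨t, ht, htT⟩ : ∃ t ≤ N, T = t ∨ T = t + N + 1 := by
    obtain hle | hgt := le_or_gt T N
    · exact ⟨T, hle, .inl rfl⟩
    · exact ⟨T - (N + 1), by omega, by omega⟩
  obtain ⟨j, q, hq, hj⟩ : ∃ j q, q ≤ 1 ∧ t = 2 * j + q := ⟨t / 2, t % 2, by omega⟩
  obtain ⟨j', q', hq', hj'⟩ : ∃ j' q', q' ≤ 1 ∧ N - t = 2 * j' + q' :=
    ⟨(N - t) / 2, (N - t) % 2, by omega⟩
  obtain rfl | rfl := htT
  · obtain hle | hgt := le_or_gt (4 * j + q) N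
    · exact ⟨j, q, by omega⟩
    · exact ⟨j', q', by omega⟩
  · obtain hle | hgt := le_or_gt (4 * j + q + 2) N
    · exact ⟨j, q, by omega⟩
    · exact ⟨j', q', by omega⟩

theorem exists_isPivot_zero_right (hu0 : 0 < u) (hu : u ≤ N) :
    ∃ i p, IsPivot N 0 i p u 0 ∨ IsPivot N 1 i p (N + 1 - u) 0 := by
  obtain ⟨i, p, hp, h⟩ := exists_pivot_residue (N := N) (T := 2 * u) (by omega)
  simp only [isPivot_zero_right]
  exact ⟨i, p, by omega⟩

theorem exists_isPivot_of_pos (hu0 : 0 < u) (hu : u ≤ N) (hv0 : 0 < v) (hv : v ≤ N)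
    (hvu : v ≠ u) : ∃ i p, (IsPivot N 0 i p u v ∨ IsPivot N 0 i p v u) ∨
      IsPivot N 1 i p (N + 1 - u) (N + 1 - v) ∨ IsPivot N 1 i p (N + 1 - v) (N + 1 - u) := by
  obtain ⟨i, p, hp, h⟩ := exists_pivot_residue (N := N) (T := u + v) (by omega)
  rw [show 2 * N + 2 - (u + v) = N + 1 - u + (N + 1 - v) by omega] at h
  refine ⟨i, p, h.imp (fun h => ?_) (fun h => ?_)⟩
  · rw [isPivot_of_pos hu0, isPivot_of_pos hv0]
    omega
  · rw [isPivot_of_pos (Nat.sub_pos_of_lt (Nat.lt_succ_of_le hu)),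
      isPivot_of_pos (Nat.sub_pos_of_lt (Nat.lt_succ_of_le hv))]
    omega

theorem exists_isPivot (hu : u ≤ N) (hv : v ≤ N) (hvu : v ≠ u) :
    ∃ i p, (IsPivot N 0 i p u v ∨ IsPivot N 0 i p v u) ∨
      IsPivot N 1 i p (negVertex N u) (negVertex N v) ∨
      IsPivot N 1 i p (negVertex N v) (negVertex N u) := by
  unfold negVertex
  obtain rfl | hu0 := Nat.eq_zero_or_pos u
  · obtain ⟨i, p, h⟩ := exists_isPivot_zero_right (Nat.pos_of_ne_zero hvu) hv
    rw [if_pos rfl, if_neg hvu]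
    exact ⟨i, p, h.imp .inr .inr⟩
  obtain rfl | hv0 := Nat.eq_zero_or_pos v
  · obtain ⟨i, p, h⟩ := exists_isPivot_zero_right hu0 hu
    rw [if_pos rfl, if_neg hu0.ne']
    exact ⟨i, p, h.imp .inl .inl⟩
  · rw [if_neg hu0.ne', if_neg hv0.ne']
    exact exists_isPivot_of_pos hu0 hu hv0 hv hvu

theorem IsArrangement.unique (hσ : IsArrangement N 0 σ) (hτ : IsArrangement N 0 τ) (hu : u ≤ N)
    (hv : v ≤ N) (hvu : v ≠ u) : σ u v = τ u v := by
  have hsum : σ u v + σ v u = τ u v + τ v u := by rw [hσ.sum hu hv hvu, hτ.sum hu hv hvu]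
  have front : ∀ {i p u v}, IsPivot N 0 i p u v → σ u v = τ u v := by
    intro i p u v hp
    have hσp := hσ.label_of_isPivot zero_le_one hp
    have hτp := hτ.label_of_isPivot zero_le_one hp
    omega
  have back : ∀ {i p u v}, u ≤ N → v ≤ N → v ≠ u →
      IsPivot N 1 i p (negVertex N u) (negVertex N v) → σ u v = τ u v := by
    intro i p u v hu hv hvu hp
    have hσp := hσ.rev.label_of_isPivot le_rfl hp
    have hτp := hτ.rev.label_of_isPivot le_rfl hp
    have hσlt := hσ.lt hu hv hvu
    have hτlt := hτ.lt hu hv hvu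
    simp only [revNumbering, negVertex_negVertex hu, negVertex_negVertex hv] at hσp hτp
    omega
  obtain ⟨i, p, (hp | hp) | hp | hp⟩ := exists_isPivot hu hv hvu
  · exact front hp
  · have := front hp
    omega
  · exact back hu hv hvu hp
  · have := back hv hu hvu.symm hp
    omega

end UniqueArrangement

section ExplicitArrangement

variable {N u v w : ℕ}

/-- In the explicit arrangement, the label at the smaller endpoint of an edge between nonzero
vertices whose sum is `T`. -/
def lowerLabel (N T : ℕ) : ℕ :=
  if T ≤ N then
    if T % 2 = (if 2 * T ≤ N then 0 else (N + 1) % 2) then N - 1 - T else T - 2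
  else
    if T % 2 = (if 2 * T ≤ 3 * N then (N + 1) % 2 else 0) then 2 * N - T else T - N - 1

/-- In the explicit arrangement, the label at `u` of the edge joining `u` to the vertex `0`. -/
def zeroLabel (N u : ℕ) : ℕ :=
  if 2 * u ≤ N then
    if N % 2 = 1 ∨ 4 * u ≤ N then N - 1 - 2 * u else N - 2 * u
  else
    if N % 2 = 1 ∨ 3 * N < 4 * u then 2 * N - 2 * u else 2 * N + 1 - 2 * u

/-- An explicit arrangement for `ε = 0`. -/
def arrangement (N u v : ℕ) : ℕ :=
  if u = 0 then edgeExp N 0 v 0 - zeroLabel N v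
  else if v = 0 then zeroLabel N u
  else if u < v then lowerLabel N (u + v)
  else edgeExp N 0 u v - lowerLabel N (u + v)

theorem lowerLabel_inj (hu : 0 < u) (huv : u < v) (hv : v ≤ N) (huw : u < w) (hw : w ≤ N)
    (h : lowerLabel N (u + v) = lowerLabel N (u + w)) : v = w := by
  unfold lowerLabel at h
  split_ifs at h <;> omega

theorem upperLabel_inj (hu : u ≤ N) (hv : 0 < v) (hvu : v < u) (hw : 0 < w) (hwu : w < u)
    (h : edgeExp N 0 u v - lowerLabel N (u + v) = edgeExp N 0 u w - lowerLabel N (u + w)) :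
    v = w := by
  rw [edgeExp_of_pos (hv.trans hvu) hv, edgeExp_of_pos (hw.trans hwu) hw] at h
  unfold lowerLabel at h
  split_ifs at h <;> omega

theorem upperLabel_ne_lowerLabel (hv : 0 < v) (hvu : v < u) (huw : u < w) (hw : w ≤ N) :
    edgeExp N 0 u v - lowerLabel N (u + v) ≠ lowerLabel N (u + w) := by
  rw [edgeExp_of_pos (hv.trans hvu) hv]
  unfold lowerLabel
  split_ifs <;> omega

theorem lowerLabel_ne_zeroLabel (hu : 0 < u) (huw : u < w) (hw : w ≤ N) :
    lowerLabel N (u + w) ≠ zeroLabel N u := by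
  unfold lowerLabel zeroLabel
  split_ifs <;> omega

theorem upperLabel_ne_zeroLabel (hu : u ≤ N) (hv : 0 < v) (hvu : v < u) :
    edgeExp N 0 u v - lowerLabel N (u + v) ≠ zeroLabel N u := by
  rw [edgeExp_of_pos (hv.trans hvu) hv]
  unfold lowerLabel zeroLabel
  split_ifs <;> omega

theorem edgeExp_le (N u v : ℕ) : edgeExp N 0 u v ≤ N := by
  unfold edgeExp
  split_ifs <;> omega

theorem lowerLabel_bounds (hu : 0 < u) (huv : u < v) (hv : v ≤ N) :
    lowerLabel N (u + v) ≤ edgeExp N 0 u v ∧ lowerLabel N (u + v) < N ∧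
      edgeExp N 0 u v < N + lowerLabel N (u + v) := by
  rw [edgeExp_of_pos hu (hu.trans huv)]
  unfold lowerLabel
  split_ifs <;> omega

theorem zeroLabel_bounds (hu0 : 0 < u) (hu : u ≤ N) :
    zeroLabel N u ≤ edgeExp N 0 u 0 ∧ zeroLabel N u < N ∧
      edgeExp N 0 u 0 < N + zeroLabel N u := by
  rw [edgeExp_zero_right]
  unfold zeroLabel
  split_ifs <;> omega

theorem zeroRow_inj (hv0 : 0 < v) (hv : v ≤ N) (hw0 : 0 < w) (hw : w ≤ N)
    (h : edgeExp N 0 v 0 - zeroLabel N v = edgeExp N 0 w 0 - zeroLabel N w) : v = w := by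
  simp only [edgeExp_zero_right] at h
  unfold zeroLabel at h
  split_ifs at h <;> omega

theorem arrangement_zero_left (N v : ℕ) :
    arrangement N 0 v = edgeExp N 0 v 0 - zeroLabel N v :=
  if_pos rfl

theorem arrangement_zero_right (hu : 0 < u) : arrangement N u 0 = zeroLabel N u := by
  rw [arrangement, if_neg hu.ne', if_pos rfl]

theorem arrangement_of_lt (hu : 0 < u) (huv : u < v) :
    arrangement N u v = lowerLabel N (u + v) := by
  rw [arrangement, if_neg hu.ne', if_neg (hu.trans huv).ne', if_pos huv]

theorem arrangement_of_gt (hv : 0 < v) (hvu : v < u) :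
    arrangement N u v = edgeExp N 0 u v - lowerLabel N (u + v) := by
  rw [arrangement, if_neg (hv.trans hvu).ne', if_neg hv.ne', if_neg hvu.not_gt]

theorem arrangement_lt (hu : u ≤ N) (hv : v ≤ N) (hvu : v ≠ u) : arrangement N u v < N := by
  obtain rfl | hu0 := Nat.eq_zero_or_pos u
  · have := zeroLabel_bounds (Nat.pos_of_ne_zero hvu) hv
    rw [arrangement_zero_left]
    omega
  obtain rfl | hv0 := Nat.eq_zero_or_pos v
  · rw [arrangement_zero_right hu0]
    exact (zeroLabel_bounds hu0 hu).2.1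
  obtain hlt | hgt := hvu.lt_or_gt
  · have := lowerLabel_bounds hv0 hlt hu
    rw [arrangement_of_gt hv0 hlt, edgeExp_comm, add_comm]
    omega
  · rw [arrangement_of_lt hu0 hgt]
    exact (lowerLabel_bounds hu0 hgt hv).2.1

theorem arrangement_add (hu : u ≤ N) (hv : v ≤ N) (hvu : v < u) :
    arrangement N u v + arrangement N v u = edgeExp N 0 u v := by
  obtain rfl | hv0 := Nat.eq_zero_or_pos v
  · rw [arrangement_zero_right hvu, arrangement_zero_left,
      Nat.add_sub_cancel' (zeroLabel_bounds hvu hu).1]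
  · rw [arrangement_of_gt hv0 hvu, arrangement_of_lt hv0 hvu, add_comm v u, Nat.sub_add_cancel]
    rw [edgeExp_comm, add_comm]
    exact (lowerLabel_bounds hv0 hvu hu).1

theorem arrangement_ne_zeroLabel (hu0 : 0 < u) (hu : u ≤ N) (hv0 : 0 < v) (hv : v ≤ N)
    (hvu : v ≠ u) : arrangement N u v ≠ zeroLabel N u := by
  obtain hlt | hgt := hvu.lt_or_gt
  · rw [arrangement_of_gt hv0 hlt]
    exact upperLabel_ne_zeroLabel hu hv0 hlt
  · rw [arrangement_of_lt hu0 hgt]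
    exact lowerLabel_ne_zeroLabel hu0 hgt hv

theorem arrangement_inj_of_pos (hu0 : 0 < u) (hu : u ≤ N) (hv0 : 0 < v) (hv : v ≤ N)
    (hw0 : 0 < w) (hw : w ≤ N) (hvu : v ≠ u) (hwu : w ≠ u)
    (h : arrangement N u v = arrangement N u w) : v = w := by
  obtain hvlt | hvgt := hvu.lt_or_gt <;> obtain hwlt | hwgt := hwu.lt_or_gt
  · rw [arrangement_of_gt hv0 hvlt, arrangement_of_gt hw0 hwlt] at h
    exact upperLabel_inj hu hv0 hvlt hw0 hwlt h
  · rw [arrangement_of_gt hv0 hvlt, arrangement_of_lt hu0 hwgt] at h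
    exact (upperLabel_ne_lowerLabel hv0 hvlt hwgt hw h).elim
  · rw [arrangement_of_lt hu0 hvgt, arrangement_of_gt hw0 hwlt] at h
    exact (upperLabel_ne_lowerLabel hw0 hwlt hvgt hv h.symm).elim
  · rw [arrangement_of_lt hu0 hvgt, arrangement_of_lt hu0 hwgt] at h
    exact lowerLabel_inj hu0 hvgt hv hwgt hw h

theorem arrangement_inj (hu : u ≤ N) (hv : v ≤ N) (hw : w ≤ N) (hvu : v ≠ u) (hwu : w ≠ u)
    (h : arrangement N u v = arrangement N u w) : v = w := by
  obtain rfl | hu0 := Nat.eq_zero_or_pos u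
  · rw [arrangement_zero_left, arrangement_zero_left] at h
    exact zeroRow_inj (Nat.pos_of_ne_zero hvu) hv (Nat.pos_of_ne_zero hwu) hw h
  obtain rfl | hv0 := Nat.eq_zero_or_pos v <;> obtain rfl | hw0 := Nat.eq_zero_or_pos w
  · rfl
  · rw [arrangement_zero_right hu0] at h
    exact (arrangement_ne_zeroLabel hu0 hu hw0 hw hwu h.symm).elim
  · rw [arrangement_zero_right hu0] at h
    exact (arrangement_ne_zeroLabel hu0 hu hv0 hv hvu h).elim
  · exact arrangement_inj_of_pos hu0 hu hv0 hv hw0 hw hvu hwu h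

theorem isArrangement_arrangement (N : ℕ) : IsArrangement N 0 (arrangement N) where
  lt := arrangement_lt
  inj := arrangement_inj
  sum {u v} hu hv hvu := by
    obtain hlt | hgt := hvu.lt_or_gt
    · exact arrangement_add hu hv hlt
    · rw [add_comm, edgeExp_comm]
      exact arrangement_add hv hu hgt

end ExplicitArrangement

section VandermondeProduct

open Equiv

/-- The exponent vector of the monomial `∏ v, ∏ w, X s(v, w) ^ g v w`. -/
noncomputable def pairExp {V : Type*} [Fintype V] (g : V → V → ℕ) : Sym2 V →₀ ℕ :=
  ∑ v, ∑ w, Finsupp.single s(v, w) (g v w)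

theorem pairExp_apply {V : Type*} [Fintype V] (g : V → V → ℕ) {a b : V} (hab : a ≠ b) :
    pairExp g s(a, b) = g a b + g b a := by
  classical
  have hsplit : ∀ v w, Finsupp.single s(v, w) (g v w) s(a, b) =
      (if v = a then if w = b then g v w else 0 else 0) +
        (if v = b then if w = a then g v w else 0 else 0) := by
    intro v w
    simp only [Finsupp.single_apply, Sym2.eq_iff]
    grind
  simp only [pairExp, Finsupp.coe_finsetSum, Finset.sum_apply, hsplit, Finset.sum_add_distrib]
  simp

theorem pairExp_apply_self {V : Type*} [Fintype V] (g : V → V → ℕ) (a : V) :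
    pairExp g s(a, a) = g a a := by
  classical
  have hsplit : ∀ v w, Finsupp.single s(v, w) (g v w) s(a, a) =
      if v = a then if w = a then g v w else 0 else 0 := by
    intro v w
    simp only [Finsupp.single_apply, Sym2.eq_iff]
    grind
  simp only [pairExp, Finsupp.coe_finsetSum, Finset.sum_apply, hsplit]
  simp

variable {N : ℕ} {v w w' : Fin (N + 1)} {σ : ℕ → ℕ → ℕ}

/-- The labelling of ordered pairs given by a permutation at each vertex, with label `0` on the
diagonal. -/
def permLabel (p : Fin (N + 1) → Perm (Fin N)) (v w : Fin (N + 1)) : ℕ :=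
  Fin.insertNth (α := fun _ => ℕ) v 0 (fun j => (p v j : ℕ)) w

@[simp] theorem permLabel_self (p : Fin (N + 1) → Perm (Fin N)) (v : Fin (N + 1)) :
    permLabel p v v = 0 :=
  Fin.insertNth_apply_same ..

@[simp] theorem permLabel_succAbove (p : Fin (N + 1) → Perm (Fin N)) (v : Fin (N + 1))
    (j : Fin N) : permLabel p v (v.succAbove j) = p v j :=
  Fin.insertNth_apply_succAbove ..

theorem permLabel_lt (p : Fin (N + 1) → Perm (Fin N)) (hwv : w ≠ v) : permLabel p v w < N := by
  obtain ⟨j, rfl⟩ := Fin.exists_succAbove_eq hwv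
  rw [permLabel_succAbove]
  exact (p v j).2

theorem permLabel_inj (p : Fin (N + 1) → Perm (Fin N)) (hwv : w ≠ v) (hwv' : w' ≠ v)
    (h : permLabel p v w = permLabel p v w') : w = w' := by
  obtain ⟨i, rfl⟩ := Fin.exists_succAbove_eq hwv
  obtain ⟨j, rfl⟩ := Fin.exists_succAbove_eq hwv'
  rw [permLabel_succAbove, permLabel_succAbove] at h
  rw [(p v).injective (Fin.ext h)]

theorem pairExp_permLabel (p : Fin (N + 1) → Perm (Fin N)) :
    pairExp (permLabel p) = ∑ v, ∑ j, Finsupp.single s(v, v.succAbove j) (p v j : ℕ) := by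
  refine Finset.sum_congr rfl fun v _ => ?_
  rw [Fin.sum_univ_succAbove _ v]
  simp

/-- The graph polynomial of the line graph of the complete graph on `Fin (N + 1)`, with each clique
of edges at a vertex written as a Vandermonde determinant. -/
noncomputable def linePoly (N : ℕ) : MvPolynomial (Sym2 (Fin (N + 1))) ℤ :=
  ∏ v, (Matrix.vandermonde fun j : Fin N => MvPolynomial.X s(v, v.succAbove j)).det

theorem det_vandermonde_X_eq_sum {ι : Type*} (f : Fin N → ι) :
    (Matrix.vandermonde fun j => (MvPolynomial.X (f j) : MvPolynomial ι ℤ)).det =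
      ∑ q : Perm (Fin N),
        MvPolynomial.monomial (∑ j, Finsupp.single (f j) (q j : ℕ)) (Perm.sign q : ℤ) := by
  rw [← Matrix.det_transpose, Matrix.det_apply']
  refine Finset.sum_congr rfl fun q _ => ?_
  rw [MvPolynomial.monomial_sum_index]
  congr 1
  refine Finset.prod_congr rfl fun j _ => ?_
  rw [Matrix.transpose_apply, Matrix.vandermonde_apply, MvPolynomial.X_pow_eq_monomial]

theorem linePoly_eq_sum (N : ℕ) : linePoly N = ∑ p : Fin (N + 1) → Perm (Fin N),
    MvPolynomial.monomial (pairExp (permLabel p)) (∏ v, (Perm.sign (p v) : ℤ)) := by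
  simp only [linePoly, det_vandermonde_X_eq_sum, Finset.prod_univ_sum, Fintype.piFinset_univ]
  refine Finset.sum_congr rfl fun p _ => ?_
  rw [pairExp_permLabel, MvPolynomial.monomial_sum_prod]

theorem coeff_linePoly_ne_zero (p : Fin (N + 1) → Perm (Fin N))
    (hp : ∀ q, pairExp (permLabel q) = pairExp (permLabel p) → q = p) :
    (linePoly N).coeff (pairExp (permLabel p)) ≠ 0 := by
  classical
  rw [linePoly_eq_sum, MvPolynomial.coeff_sum, Finset.sum_eq_single p]
  · rw [MvPolynomial.coeff_monomial, if_pos rfl, Finset.prod_ne_zero_iff]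
    exact fun v _ => Units.ne_zero _
  · intro q _ hq
    rw [MvPolynomial.coeff_monomial, if_neg (mt (hp q) hq)]
  · simp

theorem isHomogeneous_linePoly (N : ℕ) :
    (linePoly N).IsHomogeneous ((N + 1) * ∑ j : Fin N, (j : ℕ)) := by
  rw [linePoly_eq_sum]
  refine MvPolynomial.IsHomogeneous.sum _ _ _ fun p _ => MvPolynomial.isHomogeneous_monomial _ ?_
  simp only [pairExp_permLabel, map_sum, Finsupp.degree_single,
    Equiv.sum_comp (p _) (fun j : Fin N => (j : ℕ)), Finset.sum_const, Finset.card_univ,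
    Fintype.card_fin, smul_eq_mul]

theorem injOn_of_eval_linePoly_ne_zero {s : Sym2 (Fin (N + 1)) → ℤ}
    (hs : (linePoly N).eval s ≠ 0) (v : Fin (N + 1)) :
    Set.InjOn (fun w => s s(v, w)) {v}ᶜ := by
  rw [linePoly, map_prod, Finset.prod_ne_zero_iff] at hs
  have hv : (Matrix.vandermonde fun j : Fin N => s s(v, v.succAbove j)).det ≠ 0 := by
    simpa [Matrix.det_vandermonde, map_prod] using hs v (Finset.mem_univ v)
  rw [Matrix.det_vandermonde_ne_zero_iff] at hv
  intro a ha b hb hab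
  obtain ⟨i, rfl⟩ := Fin.exists_succAbove_eq ha
  obtain ⟨j, rfl⟩ := Fin.exists_succAbove_eq hb
  rw [hv hab]

theorem exists_list_colouring_of_coeff_linePoly_ne_zero {t : Sym2 (Fin (N + 1)) →₀ ℕ}
    (ht : (linePoly N).coeff t ≠ 0) (L : Sym2 (Fin (N + 1)) → Finset ℕ)
    (hL : ∀ e, t e < (L e).card) :
    ∃ c : Sym2 (Fin (N + 1)) → ℕ, (∀ e, c e ∈ L e) ∧
      ∀ v, Set.InjOn (fun w => c s(v, w)) {v}ᶜ := by
  have hdeg : (linePoly N).totalDegree = t.degree := by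
    have hne : linePoly N ≠ 0 := fun h => ht (by rw [h, MvPolynomial.coeff_zero])
    rw [(isHomogeneous_linePoly N).totalDegree hne, ← isHomogeneous_linePoly N ht,
      Finsupp.degree_eq_weight_one]
    rfl
  obtain ⟨s, hs, hne⟩ := MvPolynomial.combinatorial_nullstellensatz_exists_eval_nonzero
    (linePoly N) t ht hdeg (fun e => (L e).map Nat.castEmbedding)
    (fun e => by rw [Finset.card_map]; exact hL e)
  choose c hc hcs using fun e => Finset.mem_map.1 (hs e)
  refine ⟨c, hc, fun v a ha b hb hab => injOn_of_eval_linePoly_ne_zero hne v ha hb ?_⟩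
  simp only [← hcs]
  exact congrArg _ hab

theorem IsArrangement.exists_perm (h : IsArrangement N 0 σ) :
    ∃ p : Fin (N + 1) → Perm (Fin N), ∀ v w, w ≠ v → permLabel p v w = σ v w := by
  have hne : ∀ (v : Fin (N + 1)) (j : Fin N), (v.succAbove j : ℕ) ≠ v :=
    fun v j => Fin.val_ne_of_ne (v.succAbove_ne j)
  let row (v : Fin (N + 1)) (j : Fin N) : Fin N :=
    ⟨σ v (v.succAbove j), h.lt v.is_le (v.succAbove j).is_le (hne v j)⟩
  have hrow : ∀ v, Function.Injective (row v) := fun v i j hij =>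
    v.succAbove_right_injective <| Fin.ext <| h.inj v.is_le (v.succAbove i).is_le
      (v.succAbove j).is_le (hne v i) (hne v j) (Fin.val_eq_of_eq hij)
  refine ⟨fun v => Equiv.ofBijective (row v) (Finite.injective_iff_bijective.1 (hrow v)),
    fun v w hwv => ?_⟩
  obtain ⟨j, rfl⟩ := Fin.exists_succAbove_eq hwv
  rw [permLabel_succAbove]
  rfl

theorem isArrangement_permLabel {p : Fin (N + 1) → Perm (Fin N)}
    (hp : ∀ v w, w ≠ v → permLabel p v w + permLabel p w v = edgeExp N 0 v w) :
    IsArrangement N 0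
      fun u v => permLabel p (Fin.ofNat (N + 1) u) (Fin.ofNat (N + 1) v) where
  lt {u v} hu hv hvu := by
    lift u to Fin (N + 1) using Nat.lt_succ_of_le hu
    lift v to Fin (N + 1) using Nat.lt_succ_of_le hv
    simpa using permLabel_lt p (mt (congrArg Fin.val) hvu)
  inj {u v w} hu hv hw hvu hwu h := by
    lift u to Fin (N + 1) using Nat.lt_succ_of_le hu
    lift v to Fin (N + 1) using Nat.lt_succ_of_le hv
    lift w to Fin (N + 1) using Nat.lt_succ_of_le hw
    simp only [Fin.ofNat_eq_cast, Fin.cast_val_eq_self] at h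
    rw [permLabel_inj p (mt (congrArg Fin.val) hvu) (mt (congrArg Fin.val) hwu) h]
  sum {u v} hu hv hvu := by
    lift u to Fin (N + 1) using Nat.lt_succ_of_le hu
    lift v to Fin (N + 1) using Nat.lt_succ_of_le hv
    simpa using hp u v (mt (congrArg Fin.val) hvu)

theorem perm_eq_of_sum_eq {p q : Fin (N + 1) → Perm (Fin N)}
    (hp : ∀ v w, w ≠ v → permLabel p v w + permLabel p w v = edgeExp N 0 v w)
    (hq : ∀ v w, w ≠ v → permLabel q v w + permLabel q w v = edgeExp N 0 v w) : q = p := by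
  funext v
  ext j
  have h := (isArrangement_permLabel hq).unique (isArrangement_permLabel hp) v.is_le
    (v.succAbove j).is_le (Fin.val_ne_of_ne (v.succAbove_ne j))
  simpa using h

theorem exists_coeff_linePoly_ne_zero (N : ℕ) :
    ∃ t : Sym2 (Fin (N + 1)) →₀ ℕ, (linePoly N).coeff t ≠ 0 ∧ ∀ e, t e ≤ N := by
  obtain ⟨p, hp⟩ := (isArrangement_arrangement N).exists_perm
  have hsum : ∀ v w, w ≠ v → permLabel p v w + permLabel p w v = edgeExp N 0 v w := by
    intro v w hwv
    rw [hp v w hwv, hp w v hwv.symm]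
    exact (isArrangement_arrangement N).sum v.is_le w.is_le (Fin.val_ne_of_ne hwv)
  refine ⟨pairExp (permLabel p), coeff_linePoly_ne_zero p fun q hq => ?_, fun e => ?_⟩
  · refine perm_eq_of_sum_eq hsum fun v w hwv => ?_
    rw [← pairExp_apply _ hwv.symm, hq, pairExp_apply _ hwv.symm, hsum v w hwv]
  · induction e with | _ v w
    obtain rfl | hwv := eq_or_ne w v
    · simp [pairExp_apply_self]
    · rw [pairExp_apply _ hwv.symm, hsum v w hwv]
      exact edgeExp_le _ _ _

theorem exists_proper_list_colouring_complete {n : ℕ} (L : Sym2 (Fin n) → Finset ℕ)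
    (hL : ∀ e, n ≤ (L e).card) :
    ∃ c : Sym2 (Fin n) → ℕ, (∀ e, c e ∈ L e) ∧ ∀ v, Set.InjOn (fun w => c s(v, w)) {v}ᶜ := by
  obtain _ | N := n
  · exact ⟨isEmptyElim, isEmptyElim, isEmptyElim⟩
  · obtain ⟨t, ht, htN⟩ := exists_coeff_linePoly_ne_zero N
    exact exists_list_colouring_of_coeff_linePoly_ne_zero ht L
      fun e => (Nat.lt_succ_of_le (htN e)).trans_le (hL e)

end VandermondeProduct

section Kernels

open Finset

variable {α γ : Type*} {G : SimpleGraph α} {R : α → α → Prop} {S K : Finset α}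

/-- `K` is a kernel of `S` for the digraph with an arc from `y` to `x` whenever `R x y`: it is
independent in `G`, and each remaining vertex of `S` has an arc into it. -/
structure IsKernel (G : SimpleGraph α) (R : α → α → Prop) (S K : Finset α) : Prop where
  subset : K ⊆ S
  isIndepSet : G.IsIndepSet K
  exists_rel : ∀ y ∈ S, y ∉ K → ∃ x ∈ K, R x y

theorem IsKernel.nonempty (h : IsKernel G R S K) (hS : S.Nonempty) : K.Nonempty := by
  obtain ⟨y, hy⟩ := hS
  by_cases hyK : y ∈ K
  · exact ⟨y, hyK⟩
  · obtain ⟨x, hx, -⟩ := h.exists_rel y hy hyK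
    exact ⟨x, hx⟩

open Classical in
theorem IsKernel.card_filter_lt {L : α → Finset γ} {a : γ} {x : α}
    (h : IsKernel G R {x ∈ S | a ∈ L x} K) (hx : x ∈ S \ K)
    (hL : #{y ∈ S | R y x} < #(L x)) : #{y ∈ S \ K | R y x} < #((L x).erase a) := by
  have hsub : {y ∈ S \ K | R y x} ⊆ {y ∈ S | R y x} := filter_subset_filter _ sdiff_subset
  rw [mem_sdiff] at hx
  by_cases hax : a ∈ L x
  · obtain ⟨z, hz, hzx⟩ := h.exists_rel x (mem_filter.2 ⟨hx.1, hax⟩) hx.2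
    have hlt : #{y ∈ S \ K | R y x} < #{y ∈ S | R y x} := by
      refine card_lt_card ((ssubset_iff_of_subset hsub).2 ⟨z, ?_, ?_⟩)
      · exact mem_filter.2 ⟨(mem_filter.1 (h.subset hz)).1, hzx⟩
      · exact fun hz' => (mem_sdiff.1 (mem_filter.1 hz').1).2 hz
    rw [card_erase_of_mem hax]
    omega
  · rw [erase_eq_of_notMem hax]
    exact (card_le_card hsub).trans_lt hL

-- Bondy, Boppana and Siegel: give one colour to a kernel of the vertices whose lists contain it.
open Classical in
theorem exists_list_colouring_of_kernels [Nonempty γ] (hker : ∀ S, ∃ K, IsKernel G R S K)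
    (S : Finset α) (L : α → Finset γ) (hL : ∀ x ∈ S, #{y ∈ S | R y x} < #(L x)) :
    ∃ c : α → γ, (∀ x ∈ S, c x ∈ L x) ∧ ∀ x ∈ S, ∀ y ∈ S, G.Adj x y → c x ≠ c y := by
  induction S using Finset.strongInduction generalizing L with
  | _ S ih =>
  obtain rfl | ⟨x₀, hx₀⟩ := S.eq_empty_or_nonempty
  · exact ⟨fun _ => Classical.arbitrary γ, by simp, by simp⟩
  obtain ⟨a, ha⟩ := card_pos.1 (Nat.zero_lt_of_lt (hL x₀ hx₀))
  obtain ⟨K, hK⟩ := hker {x ∈ S | a ∈ L x}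
  have hKS : K ⊆ S := hK.subset.trans (filter_subset _ _)
  have hKne : K.Nonempty := hK.nonempty ⟨x₀, mem_filter.2 ⟨hx₀, ha⟩⟩
  obtain ⟨c, hc, hproper⟩ := ih (S \ K) (sdiff_ssubset hKS hKne) (fun x => (L x).erase a)
    fun x hx => hK.card_filter_lt hx (hL x (mem_sdiff.1 hx).1)
  have hne : ∀ x ∈ S, x ∉ K → c x ≠ a := fun x hx hxK =>
    ne_of_mem_erase (hc x (mem_sdiff.2 ⟨hx, hxK⟩))
  refine ⟨fun x => if x ∈ K then a else c x, fun x hx => ?_, fun x hx y hy hxy => ?_⟩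
  · dsimp only
    split_ifs with hxK
    · exact (mem_filter.1 (hK.subset hxK)).2
    · exact mem_of_mem_erase (hc x (mem_sdiff.2 ⟨hx, hxK⟩))
  · dsimp only
    split_ifs with hxK hyK hyK
    · exact (hK.isIndepSet hxK hyK hxy.ne hxy).elim
    · exact (hne y hy hyK).symm
    · exact hne x hx hxK
    · exact hproper x (mem_sdiff.2 ⟨hx, hxK⟩) y (mem_sdiff.2 ⟨hy, hyK⟩) hxy

end Kernels

section Galvin

open Finset SimpleGraph

variable {ρ κ γ : Type*} {rank : ρ × κ → ℕ} {S K : Finset (ρ × κ)} {x y : ρ × κ}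

/-- `x` precedes `y` in Galvin's orientation of the rook's graph: in a common row the larger rank
comes first, in a common column the smaller. -/
def Precedes (rank : ρ × κ → ℕ) (x y : ρ × κ) : Prop :=
  x.1 = y.1 ∧ rank y < rank x ∨ x.2 = y.2 ∧ rank x < rank y

/-- No rank occurs twice in a row or in a column. -/
structure IsLatin (rank : ρ × κ → ℕ) : Prop where
  row : ∀ {x y}, x.1 = y.1 → rank x = rank y → x = y
  col : ∀ {x y}, x.2 = y.2 → rank x = rank y → x = y

open Classical in
/-- The entries of `S` of maximal rank in their row. -/
noncomputable def rowMax (rank : ρ × κ → ℕ) (S : Finset (ρ × κ)) : Finset (ρ × κ) :=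
  {x ∈ S | ∀ z ∈ S, z.1 = x.1 → rank z ≤ rank x}

theorem mem_rowMax :
    x ∈ rowMax rank S ↔ x ∈ S ∧ ∀ z ∈ S, z.1 = x.1 → rank z ≤ rank x := by
  classical
  exact mem_filter

theorem exists_mem_rowMax_precedes (hy : y ∈ S) (hyS : y ∉ rowMax rank S) :
    ∃ x ∈ rowMax rank S, Precedes rank x y := by
  classical
  obtain ⟨x, hx, hmax⟩ := exists_max_image {z ∈ S | z.1 = y.1} rank ⟨y, by simp [hy]⟩
  simp only [mem_filter] at hx hmax
  refine ⟨x, mem_rowMax.2 ⟨hx.1, fun z hz hzx => hmax z ⟨hz, hzx.trans hx.2⟩⟩,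
    .inl ⟨hx.2, ?_⟩⟩
  by_contra! hle
  exact hyS (mem_rowMax.2 ⟨hy, fun z hz hzy => (hmax z ⟨hz, hzy⟩).trans hle⟩)

theorem IsLatin.exists_col_of_not_isIndepSet (hrank : IsLatin rank)
    (h : ¬ (⊤ □ ⊤ : SimpleGraph (ρ × κ)).IsIndepSet (rowMax rank S)) :
    ∃ x ∈ rowMax rank S, ∃ y ∈ S, x.2 = y.2 ∧ rank x < rank y := by
  simp only [IsIndepSet, Set.Pairwise, mem_coe, not_forall, not_not] at h
  obtain ⟨x, hx, y, hy, hne, hadj⟩ := h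
  have hxS := mem_rowMax.1 hx
  have hyS := mem_rowMax.1 hy
  obtain ⟨-, hcol⟩ | ⟨-, hrow⟩ := boxProd_adj.1 hadj
  · obtain hlt | heq | hgt := lt_trichotomy (rank x) (rank y)
    · exact ⟨x, hx, y, hyS.1, hcol, hlt⟩
    · exact (hne (hrank.col hcol heq)).elim
    · exact ⟨y, hy, x, hxS.1, hcol.symm, hgt⟩
  · have hle := hyS.2 x hxS.1 hrow
    have hge := hxS.2 y hyS.1 hrow.symm
    exact (hne (hrank.row hrow (hle.antisymm hge))).elim

open Classical in
theorem IsKernel.of_erase {G : SimpleGraph (ρ × κ)}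
    (h : IsKernel G (Precedes rank) (S.erase y) K) (hx : x ∈ rowMax rank S) (hxy : x.2 = y.2)
    (hlt : rank x < rank y) : IsKernel G (Precedes rank) S K where
  subset := h.subset.trans (erase_subset _ _)
  isIndepSet := h.isIndepSet
  exists_rel w hw hwK := by
    obtain rfl | hwy := eq_or_ne w y
    · by_cases hxK : x ∈ K
      · exact ⟨x, hxK, .inr ⟨hxy, hlt⟩⟩
      have hne : x ≠ w := fun e => hlt.ne (congrArg rank e)
      rw [mem_rowMax] at hx
      obtain ⟨z, hz, ⟨hrow, hzx⟩ | ⟨hcol, hzx⟩⟩ :=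
        h.exists_rel x (mem_erase.2 ⟨hne, hx.1⟩) hxK
      · exact (hzx.not_ge (hx.2 z (mem_of_mem_erase (h.subset hz)) hrow)).elim
      · exact ⟨z, hz, .inr ⟨hcol.trans hxy, hzx.trans hlt⟩⟩
    · exact h.exists_rel w (mem_erase.2 ⟨hwy, hw⟩) hwK

theorem IsLatin.exists_kernel (hrank : IsLatin rank) (S : Finset (ρ × κ)) :
    ∃ K, IsKernel (⊤ □ ⊤) (Precedes rank) S K := by
  classical
  induction S using Finset.strongInduction with
  | _ S ih =>
  by_cases hind : (⊤ □ ⊤ : SimpleGraph (ρ × κ)).IsIndepSet (rowMax rank S)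
  · exact ⟨rowMax rank S, filter_subset _ _, hind, fun y => exists_mem_rowMax_precedes⟩
  · obtain ⟨x, hx, y, hy, hxy, hlt⟩ := hrank.exists_col_of_not_isIndepSet hind
    obtain ⟨K, hK⟩ := ih (S.erase y) (erase_ssubset hy)
    exact ⟨K, hK.of_erase hx hxy hlt⟩

open Classical in
theorem IsLatin.card_precedes_lt {k : ℕ} (hrank : IsLatin rank) (hlt : ∀ x, rank x < k)
    (S : Finset (ρ × κ)) (x : ρ × κ) : #{y ∈ S | Precedes rank y x} < k := by
  have hmaps : Set.MapsTo rank (S.filter (Precedes rank · x)) ((range k).erase (rank x)) := by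
    intro y hy
    have hne : rank y ≠ rank x := by
      obtain ⟨-, h⟩ | ⟨-, h⟩ := (mem_filter.1 hy).2
      exacts [h.ne', h.ne]
    exact mem_erase.2 ⟨hne, mem_range.2 (hlt y)⟩
  have hinj : Set.InjOn rank (S.filter (Precedes rank · x)) := by
    intro y hy z hz h
    obtain ⟨hy, hyx⟩ | ⟨hy, hyx⟩ := (mem_filter.1 hy).2 <;>
      obtain ⟨hz, hzx⟩ | ⟨hz, hzx⟩ := (mem_filter.1 hz).2
    · exact hrank.row (hy.trans hz.symm) h
    · omega
    · omega
    · exact hrank.col (hy.trans hz.symm) h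
  calc #{y ∈ S | Precedes rank y x} ≤ #((range k).erase (rank x)) :=
        card_le_card_of_injOn rank hmaps hinj
    _ < #(range k) := card_erase_lt_of_mem (mem_range.2 (hlt x))
    _ = k := card_range k

theorem isLatin_add_mod (k : ℕ) :
    IsLatin fun x : Fin k × Fin k => ((x.1 : ℕ) + x.2) % k where
  row {x y} hrow h := by
    rw [hrow] at h
    exact Prod.ext hrow (Fin.ext ((Nat.ModEq.add_left_cancel' _ h).eq_of_lt_of_lt x.2.2 y.2.2))
  col {x y} hcol h := by
    rw [hcol] at h
    exact Prod.ext (Fin.ext ((Nat.ModEq.add_right_cancel' _ h).eq_of_lt_of_lt x.1.2 y.1.2)) hcol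

theorem exists_list_colouring_boxProd [Nonempty γ] {k : ℕ} (L : Fin k × Fin k → Finset γ)
    (hL : ∀ x, k ≤ #(L x)) :
    ∃ c : (⊤ □ ⊤ : SimpleGraph (Fin k × Fin k)).Coloring γ, ∀ x, c x ∈ L x := by
  obtain ⟨c, hc, hproper⟩ := exists_list_colouring_of_kernels (isLatin_add_mod k).exists_kernel
    univ L fun x _ => ((isLatin_add_mod k).card_precedes_lt
      (fun x => Nat.mod_lt _ x.1.pos) univ x).trans_le (hL x)
  exact ⟨Coloring.mk c fun {x y} => hproper x (mem_univ x) y (mem_univ y),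
    fun x => hc x (mem_univ x)⟩

end Galvin

section Blocks

variable {V ι κ γ : Type*}

/-- No vertex sends two edges of the same colour into one fibre (block) of `b`. -/
def IsBlockProper (b : V → ι) (c : Sym2 V → γ) : Prop :=
  ∀ x i, Set.InjOn (fun u => c s(x, u)) {u | u ≠ x ∧ b u = i}

/-- The colouring of the edges on `ι × κ` given by `D i` inside the block `i` and by `B i j` between
the blocks `i < j`. -/
def blockColouring [LinearOrder ι] (D : ι → Sym2 κ → γ) (B : ι → ι → κ × κ → γ) :
    Sym2 (ι × κ) → γ :=
  Sym2.lift ⟨fun x y =>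
    if x.1 = y.1 then D x.1 s(x.2, y.2)
    else if x.1 < y.1 then B x.1 y.1 (x.2, y.2) else B y.1 x.1 (y.2, x.2), fun x y => by
      dsimp only
      obtain hlt | heq | hgt := lt_trichotomy x.1 y.1
      · rw [if_neg hlt.ne, if_pos hlt, if_neg hlt.ne', if_neg hlt.not_gt]
      · rw [if_pos heq, if_pos heq.symm, heq, Sym2.eq_swap]
      · rw [if_neg hgt.ne', if_neg hgt.not_gt, if_neg hgt.ne, if_pos hgt]⟩

section BlockColouring

variable [LinearOrder ι] (D : ι → Sym2 κ → γ) (B : ι → ι → κ × κ → γ) {i j : ι} (a b : κ)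

theorem blockColouring_same (i : ι) : blockColouring D B s((i, a), (i, b)) = D i s(a, b) :=
  if_pos rfl

theorem blockColouring_of_lt (hij : i < j) :
    blockColouring D B s((i, a), (j, b)) = B i j (a, b) :=
  (if_neg hij.ne).trans (if_pos hij)

theorem blockColouring_of_gt (hji : j < i) :
    blockColouring D B s((i, a), (j, b)) = B j i (b, a) := by
  rw [Sym2.eq_swap, blockColouring_of_lt D B b a hji]

end BlockColouring

theorem isBlockProper_blockColouring [LinearOrder ι] {D : ι → Sym2 κ → γ}
    {B : ι → ι → (⊤ □ ⊤ : SimpleGraph (κ × κ)).Coloring γ}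
    (hD : ∀ i a, Set.InjOn (fun b => D i s(a, b)) {a}ᶜ) :
    IsBlockProper Prod.fst (blockColouring D fun i j => B i j) := by
  rintro ⟨j, x⟩ i ⟨i₁, a⟩ ⟨ha, hi₁⟩ ⟨i₂, b⟩ ⟨hb, hi₂⟩ hab
  obtain rfl : i₁ = i := hi₁
  obtain rfl : i₂ = i₁ := hi₂
  dsimp only at hab
  obtain hlt | rfl | hgt := lt_trichotomy j i₂
  · simp only [blockColouring_of_lt _ _ _ _ hlt] at hab
    by_contra! hne
    exact (B j i₂).valid (by simpa using hne) hab
  · simp only [blockColouring_same] at hab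
    exact congrArg _ (hD j x (by simpa using ha) (by simpa using hb) hab)
  · simp only [blockColouring_of_gt _ _ _ _ hgt] at hab
    by_contra! hne
    exact (B i₂ j).valid (by simpa using hne) hab

theorem exists_list_colouring_isBlockProper_prod [LinearOrder ι] {k : ℕ}
    (L : Sym2 (ι × Fin k) → Finset ℕ) (hL : ∀ e, k ≤ (L e).card) :
    ∃ c : Sym2 (ι × Fin k) → ℕ, (∀ e, c e ∈ L e) ∧ IsBlockProper Prod.fst c := by
  choose D hDL hD using fun i : ι =>
    exists_proper_list_colouring_complete (fun e : Sym2 (Fin k) => L (e.map (i, ·)))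
      fun e => hL _
  choose B hBL using fun i j : ι =>
    exists_list_colouring_boxProd (fun x : Fin k × Fin k => L s((i, x.1), (j, x.2)))
      fun x => hL _
  refine ⟨blockColouring D fun i j => B i j, fun e => ?_, isBlockProper_blockColouring hD⟩
  induction e with | _ x y
  obtain ⟨i, a⟩ := x
  obtain ⟨j, b⟩ := y
  obtain hlt | rfl | hgt := lt_trichotomy i j
  · rw [blockColouring_of_lt _ _ _ _ hlt]
    exact hBL i j (a, b)
  · rw [blockColouring_same]
    exact hDL i s(a, b)
  · rw [blockColouring_of_gt _ _ _ _ hgt, Sym2.eq_swap]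
    exact hBL j i (b, a)

theorem exists_list_colouring_isBlockProper [LinearOrder ι] {k : ℕ} {φ : V → ι × Fin k}
    (hφ : Function.Injective φ) (L : Sym2 V → Finset ℕ)
    (hL : ∀ e, ¬ e.IsDiag → k ≤ (L e).card) :
    ∃ c : Sym2 V → ℕ, (∀ e, ¬ e.IsDiag → c e ∈ L e) ∧ IsBlockProper (fun v => (φ v).1) c := by
  classical
  let L' (e : Sym2 V) : Finset ℕ := if e.IsDiag then Finset.range k else L e
  have hL' : ∀ e, k ≤ (L' e).card := by
    intro e
    dsimp only [L']
    split_ifs with he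
    exacts [(Finset.card_range k).ge, hL e he]
  let M := Function.extend (Sym2.map φ) L' fun _ => Finset.range k
  have hM_map : ∀ e, M (e.map φ) = L' e := (Sym2.map.injective hφ).extend_apply L' _
  have hM : ∀ e, k ≤ (M e).card := by
    intro e
    by_cases he : ∃ e', Sym2.map φ e' = e
    · obtain ⟨e', rfl⟩ := he
      exact (hM_map e').symm ▸ hL' e'
    · rw [show M e = Finset.range k from Function.extend_apply' L' _ e he, Finset.card_range]
  obtain ⟨c, hc, hproper⟩ := exists_list_colouring_isBlockProper_prod M hM
  refine ⟨fun e => c (e.map φ), fun e he => ?_, fun x i u hu v hv huv => hφ ?_⟩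
  · have hce := hc (e.map φ)
    rwa [hM_map, show L' e = L e from if_neg he] at hce
  · exact hproper (φ x) i ⟨hφ.ne hu.1, hu.2⟩ ⟨hφ.ne hv.1, hv.2⟩ huv

end Blocks

section Star

variable {β : Type*} {n r : ℕ}

theorem hasMonoCopy_starGraph_iff {c : Sym2 (Fin n) → β} :
    HasMonoCopy (starGraph r) c ↔
      ∃ (v : Fin n) (x : β) (T : Finset (Fin n)), T.card = r ∧ ∀ u ∈ T, u ≠ v ∧ c s(v, u) = x := by
  constructor
  · rintro ⟨f, x, hf, hfx⟩
    refine ⟨f 0, x, Finset.univ.map ((Fin.succEmb r).trans ⟨f, hf⟩), by simp, fun u hu => ?_⟩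
    obtain ⟨i, -, rfl⟩ := Finset.mem_map.1 hu
    exact ⟨hf.ne i.succ_ne_zero, hfx _ _ (by simp [starGraph, i.succ_ne_zero.symm])⟩
  · rintro ⟨v, x, T, hT, hTx⟩
    let g := T.orderEmbOfFin hT
    have hg : ∀ i, g i ≠ v ∧ c s(v, g i) = x := fun i => hTx _ (T.orderEmbOfFin_mem hT i)
    refine ⟨Fin.cons v g, x, Fin.cons_injective_iff.2 ⟨?_, g.injective⟩, fun a b hab => ?_⟩
    · rintro ⟨i, hi⟩
      exact (hg i).1 hi
    · rw [starGraph, SimpleGraph.fromRel_adj] at hab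
      obtain ⟨hne, rfl | rfl⟩ := hab
      · obtain ⟨i, rfl⟩ := Fin.exists_succ_eq.2 hne.symm
        exact (hg i).2
      · obtain ⟨i, rfl⟩ := Fin.exists_succ_eq.2 hne
        rw [Sym2.eq_swap]
        exact (hg i).2

theorem hasMonoCopy_starGraph_of_card_mul_le {C : Finset β} (hC : C.Nonempty)
    (hn : C.card * r ≤ n) (c : Sym2 (Fin (n + 1)) → β) (hc : ∀ e, ¬ e.IsDiag → c e ∈ C) :
    HasMonoCopy (starGraph r) c := by
  classical
  obtain ⟨x, -, hx⟩ := Finset.exists_le_card_fiber_of_mul_le_card_of_maps_to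
    (s := Finset.univ.erase (0 : Fin (n + 1))) (f := fun u => c s(0, u)) (n := r)
    (fun u hu => hc _ (Finset.ne_of_mem_erase hu).symm) hC (by simpa using hn)
  obtain ⟨T, hT, hTcard⟩ := Finset.exists_subset_card_eq hx
  refine hasMonoCopy_starGraph_iff.2 ⟨0, x, T, hTcard, fun u hu => ?_⟩
  have hu' := Finset.mem_filter.1 (hT hu)
  exact ⟨Finset.ne_of_mem_erase hu'.1, hu'.2⟩

theorem IsBlockProper.not_hasMonoCopy_starGraph {ι : Type*} [Fintype ι] {b : Fin n → ι}
    {c : Sym2 (Fin n) → β} (h : IsBlockProper b c) (hr : Fintype.card ι < r) :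
    ¬ HasMonoCopy (starGraph r) c := by
  rw [hasMonoCopy_starGraph_iff]
  rintro ⟨v, x, T, hT, hTx⟩
  obtain ⟨y, hy, z, hz, hyz, hb⟩ := Finset.exists_ne_map_eq_of_card_lt_of_maps_to
    (s := T) (t := Finset.univ) (f := b) (by rwa [hT]) fun u _ => Finset.mem_univ (b u)
  exact hyz <| h v (b z) ⟨(hTx y hy).1, hb⟩ ⟨(hTx z hz).1, rfl⟩
    ((hTx y hy).2.trans (hTx z hz).2.symm)

end Star

theorem list_ramsey_star_lower_bound (r k : ℕ) (hr : 1 ≤ r) (hk : 1 ≤ k) :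
    (r - 1) * k + 1 ≤ listRamsey (starGraph r) k := by
  apply le_csInf
  · have hrange : (Finset.range k).Nonempty := Finset.nonempty_range_iff.2 (by omega)
    exact ⟨k * r + 1, fun _ => Finset.range k, fun _ _ => Finset.card_range k,
      hasMonoCopy_starGraph_of_card_mul_le hrange (by rw [Finset.card_range])⟩
  · rintro n ⟨L, hL, hmono⟩
    by_contra! hn
    let φ (v : Fin n) : Fin (r - 1) × Fin k :=
      finProdFinEquiv.symm (Fin.castLE (Nat.le_of_lt_succ hn) v)
    have hφ : Function.Injective φ := finProdFinEquiv.symm.injective.comp (Fin.castLE_injective _)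
    obtain ⟨c, hc, hproper⟩ :=
      exists_list_colouring_isBlockProper hφ L fun e he => (hL e he).ge
    have hcard : Fintype.card (Fin (r - 1)) < r := by
      rw [Fintype.card_fin]
      omega
    exact hproper.not_hasMonoCopy_starGraph hcard (hmono c hc)
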